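/- arXiv:1707.07629 — 2 statements merged into one kernel-verified Lean document; each statement's English description precedes it below -/
import Mathlib

section
/- Let d be a positive integer and let X be an n×n integer matrix with det X = d or det X = −d. Then there exists exactly one n×n integer matrix H in left Hermite normal form with det H = d such that X = U·H for some n×n unimodular matrix U; consequently the L-equivalence classes of the LHNF matrices of determinant d form a partition of the set of all integer solutions of |det X| = d. -/
open Matrix

/-- An `n × n` integer matrix is unimodular if its determinant is `1` or `-1`. -/
def Unimodular {n : ℕ} (U : Matrix (Fin n) (Fin n) ℤ) : Prop :=
  U.det = 1 ∨ U.det = -1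

/-- A square integer matrix is in left Hermite normal form: it is lower triangular,
its diagonal entries are positive, and each entry below the diagonal is nonnegative
and smaller than the diagonal entry of its column. -/
def LHNF {n : ℕ} (H : Matrix (Fin n) (Fin n) ℤ) : Prop :=
  (∀ i j, i < j → H i j = 0) ∧
  (∀ i, 0 < H i i) ∧
  (∀ i j, j < i → 0 ≤ H i j ∧ H i j < H j j)

/-! For a lattice `L` of row vectors, the leading coefficients at a given position (entries of
vectors of `L` that vanish at all later positions) form an ideal, and a sublattice with the same
ideals is all of `L`. Choosing for each position a vector of `L` that realizes a generator of its
ideal therefore gives a lower triangular matrix whose rows span `L`; reducing its entries modulo the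
pivots from right to left makes it a Hermite normal form. Conversely, the pivots generate these
ideals, so two Hermite normal forms with the same row lattice have the same diagonal, and each row
of their difference is a lattice vector with all entries smaller in absolute value than the pivots,
hence zero. Left multiplication by a unimodular matrix is exactly what preserves the row lattice.
-/

section RowModule

variable {R l m n : Type*} [CommRing R] [Fintype m] [Fintype n]

lemma row_mem_range_vecMulLinear (A : Matrix m l R) (i : m) :
    A i ∈ LinearMap.range A.vecMulLinear := by
  rw [range_vecMulLinear]
  exact Submodule.subset_span ⟨i, rfl⟩

lemma range_vecMulLinear_le_iff_row_mem {A : Matrix m l R} {L : Submodule R (l → R)} :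
    LinearMap.range A.vecMulLinear ≤ L ↔ ∀ i, A i ∈ L := by
  rw [range_vecMulLinear, Submodule.span_le, Set.range_subset_iff]
  rfl

lemma range_vecMulLinear_le_iff_exists_eq_mul {A : Matrix m l R} {B : Matrix n l R} :
    LinearMap.range A.vecMulLinear ≤ LinearMap.range B.vecMulLinear ↔
      ∃ U : Matrix m n R, A = U * B := by
  rw [range_vecMulLinear_le_iff_row_mem]
  constructor
  · intro hrows
    choose U hU using hrows
    exact ⟨of U, funext fun i ↦ (hU i).symm⟩
  · rintro ⟨U, rfl⟩ i
    exact ⟨U i, rfl⟩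

variable [DecidableEq m]

lemma range_vecMulLinear_mul_of_isUnit_det {U : Matrix m m R} (hU : IsUnit U.det)
    (A : Matrix m l R) :
    LinearMap.range (U * A).vecMulLinear = LinearMap.range A.vecMulLinear := by
  apply le_antisymm <;> rw [range_vecMulLinear_le_iff_exists_eq_mul]
  · exact ⟨U, rfl⟩
  · exact ⟨U⁻¹, (nonsing_inv_mul_cancel_left U A hU).symm⟩

lemma exists_isUnit_det_eq_mul_of_range_vecMulLinear_eq [NoZeroDivisors R] {A B : Matrix m m R}
    (hA : A.det ≠ 0)
    (hAB : LinearMap.range A.vecMulLinear = LinearMap.range B.vecMulLinear) :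
    ∃ U : Matrix m m R, IsUnit U.det ∧ A = U * B := by
  obtain ⟨U, hU⟩ := range_vecMulLinear_le_iff_exists_eq_mul.mp hAB.le
  obtain ⟨V, hV⟩ := range_vecMulLinear_le_iff_exists_eq_mul.mp hAB.ge
  have hdet : U.det * V.det * A.det = 1 * A.det := by
    rw [← det_mul, ← det_mul, Matrix.mul_assoc, ← hV, ← hU, one_mul]
  exact ⟨U, .of_mul_eq_one _ (mul_right_cancel₀ hA hdet), hU⟩

end RowModule

section LeadingIdeal

variable {ι R : Type*} [LinearOrder ι]

lemma exists_last_ne_zero [WellFoundedGT ι] [Zero R] {v : ι → R} (hv : v ≠ 0) :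
    ∃ j, v j ≠ 0 ∧ ∀ k, j < k → v k = 0 := by
  obtain ⟨j, hj, hmax⟩ := wellFounded_gt.has_min {j | v j ≠ 0} (Function.ne_iff.mp hv)
  exact ⟨j, hj, fun k hjk ↦ not_not.mp fun hk ↦ hmax k hk hjk⟩

variable [CommRing R]

/-- The ideal of leading coefficients of `L` at position `j`: the `j`-th entries of those vectors
of `L` that vanish at every later position. -/
def leadingIdeal (L : Submodule R (ι → R)) (j : ι) : Ideal R :=
  (L ⊓ Submodule.pi (Set.Ioi j) fun _ ↦ ⊥).map (LinearMap.proj j)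

lemma mem_leadingIdeal {L : Submodule R (ι → R)} {j : ι} {a : R} :
    a ∈ leadingIdeal L j ↔ ∃ v ∈ L, (∀ k, j < k → v k = 0) ∧ v j = a := by
  simp [leadingIdeal, Submodule.mem_pi, and_assoc]

lemma eq_of_le_of_leadingIdeal_le [Finite ι] {N L : Submodule R (ι → R)} (hNL : N ≤ L)
    (hlead : ∀ j, leadingIdeal L j ≤ leadingIdeal N j) : N = L := by
  suffices hmem : ∀ j, ∀ v ∈ L, (∀ k, j < k → v k = 0) → v ∈ N by
    refine hNL.antisymm fun v hv ↦ ?_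
    rcases eq_or_ne v 0 with rfl | hv0
    · exact N.zero_mem
    · obtain ⟨j, -, hj⟩ := exists_last_ne_zero hv0
      exact hmem j v hv hj
  intro j
  induction j using WellFoundedLT.induction with
  | ind j ih =>
    intro v hv hvanish
    obtain ⟨w, hw, hwvanish, hwj⟩ :=
      mem_leadingIdeal.mp (hlead j (mem_leadingIdeal.mpr ⟨v, hv, hvanish, rfl⟩))
    have hsub_vanish : ∀ k, j ≤ k → (v - w) k = 0 := fun k hjk ↦ by
      rcases hjk.eq_or_lt with rfl | hjk
      · simp [hwj]
      · simp [hvanish k hjk, hwvanish k hjk]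
    rw [← N.sub_mem_iff_left hw]
    rcases eq_or_ne (v - w) 0 with hsub | hsub
    · exact hsub ▸ N.zero_mem
    · obtain ⟨i, hi, hi_last⟩ := exists_last_ne_zero hsub
      have hij : i < j := lt_of_not_ge fun hji ↦ hi (hsub_vanish i hji)
      exact ih i hij _ (L.sub_mem hv (hNL hw)) hi_last

variable [Fintype ι]

lemma exists_isLowerTriangular_range_eq [IsPrincipalIdealRing R] (L : Submodule R (ι → R)) :
    ∃ B : Matrix ι ι R, B.IsLowerTriangular ∧ LinearMap.range B.vecMulLinear = L := by
  have hpivot (j : ι) : ∃ v ∈ L, (∀ k, j < k → v k = 0) ∧ leadingIdeal L j = Ideal.span {v j} := by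
    obtain ⟨a, ha⟩ := (IsPrincipalIdealRing.principal (leadingIdeal L j)).principal
    have ha_mem : a ∈ leadingIdeal L j := ha ▸ Submodule.mem_span_singleton_self a
    obtain ⟨v, hv, hvanish, rfl⟩ := mem_leadingIdeal.mp ha_mem
    exact ⟨v, hv, hvanish, ha⟩
  choose B hBL hvanish hgen using hpivot
  refine ⟨of B, fun i j ↦ hvanish i j, eq_of_le_of_leadingIdeal_le
    (range_vecMulLinear_le_iff_row_mem.mpr hBL) fun j ↦ ?_⟩
  rw [hgen, Ideal.span_singleton_le_iff_mem, mem_leadingIdeal]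
  exact ⟨B j, row_mem_range_vecMulLinear (of B) j, hvanish j, rfl⟩

lemma vecMul_apply_of_isLowerTriangular {B : Matrix ι ι R} (hB : B.IsLowerTriangular)
    {c : ι → R} {j : ι} (hc : ∀ k, j < k → c k = 0) : (c ᵥ* B) j = c j * B j j := by
  simp only [vecMul, dotProduct]
  refine Finset.sum_eq_single j (fun i _ hij ↦ ?_) (by simp)
  rcases hij.lt_or_gt with hij | hji
  · rw [hB hij, mul_zero]
  · rw [hc i hji, zero_mul]

lemma leadingIdeal_range_of_isLowerTriangular [NoZeroDivisors R] {B : Matrix ι ι R}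
    (hB : B.IsLowerTriangular) (hdiag : ∀ j, B j j ≠ 0) (j : ι) :
    leadingIdeal (LinearMap.range B.vecMulLinear) j = Ideal.span {B j j} := by
  ext a
  rw [Ideal.mem_span_singleton, mem_leadingIdeal]
  constructor
  · rintro ⟨_, ⟨c, rfl⟩, hvanish, rfl⟩
    simp only [vecMulLinear_apply] at hvanish ⊢
    have hc : ∀ k, j < k → c k = 0 := by
      intro k
      induction k using WellFoundedGT.induction with
      | ind k ih =>
        intro hjk
        have hk := vecMul_apply_of_isLowerTriangular hB fun i hki ↦ ih i hki (hjk.trans hki)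
        rw [hvanish k hjk, zero_eq_mul] at hk
        exact hk.resolve_right (hdiag k)
    rw [vecMul_apply_of_isLowerTriangular hB hc]
    exact dvd_mul_left _ _
  · rintro ⟨q, rfl⟩
    refine ⟨q • B j, Submodule.smul_mem _ q (row_mem_range_vecMulLinear B j), fun k hjk ↦ ?_, ?_⟩
    · rw [Pi.smul_apply, hB hjk, smul_zero]
    · rw [Pi.smul_apply, smul_eq_mul, mul_comm]

end LeadingIdeal

section Reduction

variable {ι : Type*} [LinearOrder ι] [Fintype ι] {B : Matrix ι ι ℤ}

lemma exists_sub_mem_range_and_lt_abs_diag (hB : B.IsLowerTriangular) (hdiag : ∀ j, B j j ≠ 0)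
    (s : Finset ι) (v : ι → ℤ) :
    ∃ w, w - v ∈ LinearMap.range B.vecMulLinear ∧ (∀ k, (∀ i ∈ s, i < k) → w k = v k) ∧
      ∀ k ∈ s, 0 ≤ w k ∧ w k < |B k k| := by
  induction s using Finset.induction_on_max generalizing v with
  | empty => exact ⟨v, by simp, by simp, by simp⟩
  | insert j s hs ih =>
    obtain ⟨w, hw, hfix, hred⟩ := ih (v - (v j / B j j) • B j)
    have hwj : w j = v j % B j j := by
      rw [hfix j hs, Pi.sub_apply, Pi.smul_apply, smul_eq_mul, Int.emod_def, mul_comm]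
    refine ⟨w, ?_, fun k hk ↦ ?_, fun k hk ↦ ?_⟩
    · rwa [sub_sub_eq_add_sub, add_sub_right_comm, Submodule.add_mem_iff_left _
        (Submodule.smul_mem _ _ (row_mem_range_vecMulLinear B j))] at hw
    · rw [Finset.forall_mem_insert] at hk
      rw [hfix k hk.2, Pi.sub_apply, Pi.smul_apply, hB hk.1, smul_zero, sub_zero]
    · rcases Finset.mem_insert.mp hk with rfl | hks
      · rw [hwj]
        exact ⟨Int.emod_nonneg _ (hdiag k), Int.emod_lt_abs _ (hdiag k)⟩
      · exact hred k hks

lemma eq_zero_of_mem_range_of_abs_lt_diag (hB : B.IsLowerTriangular) {v : ι → ℤ}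
    (hv : v ∈ LinearMap.range B.vecMulLinear) (hlt : ∀ j, |v j| < B j j) : v = 0 := by
  by_contra hv0
  obtain ⟨j, hj, hvanish⟩ := exists_last_ne_zero hv0
  have hdiag : ∀ i, B i i ≠ 0 := fun i ↦ ((abs_nonneg _).trans_lt (hlt i)).ne'
  have hmem : v j ∈ leadingIdeal (LinearMap.range B.vecMulLinear) j :=
    mem_leadingIdeal.mpr ⟨v, hv, hvanish, rfl⟩
  rw [leadingIdeal_range_of_isLowerTriangular hB hdiag, Ideal.mem_span_singleton] at hmem
  exact hj (Int.eq_zero_of_abs_lt_dvd hmem (hlt j))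

end Reduction

section HermiteNormalForm

variable {n : ℕ} {H H' : Matrix (Fin n) (Fin n) ℤ}

lemma unimodular_iff_isUnit_det {U : Matrix (Fin n) (Fin n) ℤ} :
    Unimodular U ↔ IsUnit U.det :=
  Int.isUnit_iff.symm

lemma LHNF.isLowerTriangular (hH : LHNF H) : H.IsLowerTriangular :=
  fun i j ↦ hH.1 i j

lemma LHNF.det_pos (hH : LHNF H) : 0 < H.det := by
  rw [det_of_isLowerTriangular H hH.isLowerTriangular]
  exact Finset.prod_pos fun i _ ↦ hH.2.1 i

lemma LHNF.det_eq_abs_det_mul (hH : LHNF H) {U : Matrix (Fin n) (Fin n) ℤ} (hU : Unimodular U) :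
    H.det = |(U * H).det| := by
  rw [det_mul, abs_mul, Int.isUnit_iff_abs_eq.mp (unimodular_iff_isUnit_det.mp hU), one_mul,
    abs_of_pos hH.det_pos]

lemma exists_LHNF_range_eq_of_isLowerTriangular {B : Matrix (Fin n) (Fin n) ℤ}
    (hB : B.IsLowerTriangular) (hdiag : ∀ j, B j j ≠ 0) :
    ∃ H, LHNF H ∧ LinearMap.range H.vecMulLinear = LinearMap.range B.vecMulLinear := by
  choose H hmem hfix hred using fun i ↦
    exists_sub_mem_range_and_lt_abs_diag hB hdiag (Finset.Iio i) ((B i i).sign • B i)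
  simp only [Finset.mem_Iio] at hfix hred
  have hupper : ∀ i j, i < j → H i j = 0 := fun i j hij ↦ by
    rw [hfix i j fun k hki ↦ hki.trans hij, Pi.smul_apply, hB hij, smul_zero]
  have hdiag_eq : ∀ i, H i i = |B i i| := fun i ↦ by
    rw [hfix i i fun _ ↦ id, Pi.smul_apply, smul_eq_mul, Int.sign_mul_self_eq_abs]
  have hrow : ∀ i, H i ∈ LinearMap.range B.vecMulLinear := fun i ↦
    (Submodule.sub_mem_iff_left _
      (Submodule.smul_mem _ _ (row_mem_range_vecMulLinear B i))).mp (hmem i)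
  refine ⟨of H, ⟨hupper, fun i ↦ ?_, fun i j hji ↦ ?_⟩, eq_of_le_of_leadingIdeal_le
    (range_vecMulLinear_le_iff_row_mem.mpr hrow) fun j ↦ ?_⟩
  · rw [of_apply, hdiag_eq]
    exact abs_pos.mpr (hdiag i)
  · rw [of_apply, of_apply, hdiag_eq]
    exact hred i j hji
  · rw [leadingIdeal_range_of_isLowerTriangular hB hdiag, Ideal.span_singleton_le_iff_mem,
      ← abs_mem_iff, mem_leadingIdeal]
    exact ⟨H j, row_mem_range_vecMulLinear (of H) j, hupper j, hdiag_eq j⟩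

lemma exists_LHNF_range_eq {X : Matrix (Fin n) (Fin n) ℤ} (hX : X.det ≠ 0) :
    ∃ H, LHNF H ∧ LinearMap.range H.vecMulLinear = LinearMap.range X.vecMulLinear := by
  obtain ⟨B, hB, hBX⟩ := exists_isLowerTriangular_range_eq (LinearMap.range X.vecMulLinear)
  obtain ⟨U, rfl⟩ := range_vecMulLinear_le_iff_exists_eq_mul.mp hBX.ge
  have hdiag : ∀ j, B j j ≠ 0 := by
    rw [det_mul, det_of_isLowerTriangular B hB] at hX
    simpa [Finset.prod_ne_zero_iff] using right_ne_zero_of_mul hX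
  rw [← hBX]
  exact exists_LHNF_range_eq_of_isLowerTriangular hB hdiag

lemma LHNF.diag_eq_of_range_eq (hH : LHNF H) (hH' : LHNF H')
    (hrange : LinearMap.range H.vecMulLinear = LinearMap.range H'.vecMulLinear) (j : Fin n) :
    H j j = H' j j := by
  have hspan : Ideal.span {H j j} = Ideal.span {H' j j} := by
    rw [← leadingIdeal_range_of_isLowerTriangular hH.isLowerTriangular fun i ↦ (hH.2.1 i).ne',
      ← leadingIdeal_range_of_isLowerTriangular hH'.isLowerTriangular fun i ↦ (hH'.2.1 i).ne',
      hrange]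
  exact Int.eq_of_associated_of_nonneg (Ideal.span_singleton_eq_span_singleton.mp hspan)
    (hH.2.1 j).le (hH'.2.1 j).le

lemma LHNF.eq_of_range_eq (hH : LHNF H) (hH' : LHNF H')
    (hrange : LinearMap.range H.vecMulLinear = LinearMap.range H'.vecMulLinear) : H = H' := by
  have hdiag := hH.diag_eq_of_range_eq hH' hrange
  refine funext fun i ↦ sub_eq_zero.mp ?_
  have hmem : H i - H' i ∈ LinearMap.range H.vecMulLinear :=
    Submodule.sub_mem _ (row_mem_range_vecMulLinear H i)
      (hrange ▸ row_mem_range_vecMulLinear H' i)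
  refine eq_zero_of_mem_range_of_abs_lt_diag hH.isLowerTriangular hmem fun j ↦ ?_
  rw [Pi.sub_apply]
  rcases lt_trichotomy i j with hij | rfl | hji
  · simpa [hH.1 i j hij, hH'.1 i j hij] using hH.2.1 j
  · simpa [hdiag i] using hH'.2.1 i
  · have hentry := hH.2.2 i j hji
    have hentry' := hH'.2.2 i j hji
    rw [← hdiag j] at hentry'
    exact abs_sub_lt_of_nonneg_of_lt hentry.1 hentry.2 hentry'.1 hentry'.2

end HermiteNormalForm

/-- Every integer matrix `X` with `det X = ±d` is L-equivalent to exactly one matrix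
in left Hermite normal form with determinant `d`; hence the L-equivalence classes of
the LHNF matrices of determinant `d` partition the set of solutions of `|det X| = d`. -/
theorem stmt_9 {n : ℕ} (d : ℤ) (hd : 0 < d) (X : Matrix (Fin n) (Fin n) ℤ)
    (hX : X.det = d ∨ X.det = -d) :
    ∃! H : Matrix (Fin n) (Fin n) ℤ,
      LHNF H ∧ H.det = d ∧ ∃ U : Matrix (Fin n) (Fin n) ℤ, Unimodular U ∧ X = U * H := by
  have hXdet : |X.det| = d := (abs_eq hd.le).mpr hX
  have hX0 : X.det ≠ 0 := abs_pos.mp (hXdet ▸ hd)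
  obtain ⟨H, hH, hHX⟩ := exists_LHNF_range_eq hX0
  obtain ⟨U, hU, hXU⟩ := exists_isUnit_det_eq_mul_of_range_vecMulLinear_eq hX0 hHX.symm
  rw [← unimodular_iff_isUnit_det] at hU
  have hdet : H.det = d := by rw [hH.det_eq_abs_det_mul hU, ← hXU, hXdet]
  refine ⟨H, ⟨hH, hdet, U, hU, hXU⟩, ?_⟩
  rintro H' ⟨hH', -, U', hU', rfl⟩
  rw [unimodular_iff_isUnit_det] at hU'
  exact hH'.eq_of_range_eq hH ((range_vecMulLinear_mul_of_isUnit_det hU' H').symm.trans hHX.symm)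
end

section
/- Let A be an r×n integer matrix of rank r with 0 < r < n, let d be a positive integer, and let X and S be two solutions of |det [A;X]| = d. Then X is L-A-equivalent to S if and only if there exist an (n−r)×r integer matrix Λ and an (n−r)×(n−r) unimodular matrix W′ such that X = Λ·A + W′·S. -/
open Matrix

/-- The matrix `[A; X]` obtained by stacking `A` above `X`. -/
def stack {r k n : ℕ} (A : Matrix (Fin r) (Fin n) ℤ) (X : Matrix (Fin k) (Fin n) ℤ) :
    Matrix (Fin (r + k)) (Fin n) ℤ :=
  (Matrix.fromRows A X).submatrix finSumFinEquiv.symm id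

/-- `X` is a solution of `|det [A; X]| = d`. -/
def IsSolution {r k : ℕ} (A : Matrix (Fin r) (Fin (r + k)) ℤ) (d : ℤ)
    (X : Matrix (Fin k) (Fin (r + k)) ℤ) : Prop :=
  (stack A X).det = d ∨ (stack A X).det = -d

/-- Two solutions `X`, `X'` are L-A-equivalent if `[A; X] = U · [A; X']` for some
unimodular `U`. -/
def LAEquiv {r k : ℕ} (A : Matrix (Fin r) (Fin (r + k)) ℤ)
    (X X' : Matrix (Fin k) (Fin (r + k)) ℤ) : Prop :=
  ∃ U : Matrix (Fin (r + k)) (Fin (r + k)) ℤ, Unimodular U ∧ stack A X = U * stack A X'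

/-!
If `[A; X] = U · [A; S]`, the lower rows read `X = Λ·A + W·S`, where `Λ` and `W` are the lower
blocks of `U`. Then `[1 0; Λ W]` also carries `[A; S]` to `[A; X]`, so it equals `U` because the
rows of `[A; S]` are linearly independent; and `[1 0; Λ W]` is invertible exactly when `W` is.
-/

section BlockMatrices

variable {R l m p n : Type*} [Fintype m] [Fintype p]

section Semiring

variable [Semiring R]

theorem mul_right_cancel_of_linearIndependent_row {U V : Matrix l m R} {M : Matrix m n R}
    (hM : LinearIndependent R M.row) (h : U * M = V * M) : U = V := by
  funext i
  apply vecMul_injective_iff.mpr hM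
  simpa only [mul_apply_eq_vecMul] using congrFun h i

variable [DecidableEq m] {A : Matrix m n R} {X S : Matrix p n R}

theorem fromBlocks_one_zero_mul_fromRows (Λ : Matrix p m R) (W : Matrix p p R) :
    fromBlocks 1 0 Λ W * fromRows A S = fromRows A (Λ * A + W * S) := by
  rw [fromBlocks_mul_fromRows, Matrix.one_mul, Matrix.zero_mul, add_zero]

theorem fromRows_eq_mul_fromRows_iff (hS : LinearIndependent R (fromRows A S).row)
    {U : Matrix (m ⊕ p) (m ⊕ p) R} :
    fromRows A X = U * fromRows A S ↔
      ∃ (Λ : Matrix p m R) (W : Matrix p p R),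
        U = fromBlocks 1 0 Λ W ∧ X = Λ * A + W * S := by
  constructor
  · intro h
    have hX : X = U.toBlocks₂₁ * A + U.toBlocks₂₂ * S := by
      rw [← fromBlocks_toBlocks U, fromBlocks_mul_fromRows] at h
      exact (fromRows_inj h).2
    refine ⟨U.toBlocks₂₁, U.toBlocks₂₂, mul_right_cancel_of_linearIndependent_row hS ?_, hX⟩
    rw [fromBlocks_one_zero_mul_fromRows, ← hX, h]
  · rintro ⟨Λ, W, rfl, rfl⟩
    exact (fromBlocks_one_zero_mul_fromRows Λ W).symm

end Semiring

theorem stmt_16_general [CommRing R] [DecidableEq m] [DecidableEq p]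
    {A : Matrix m n R} {X S : Matrix p n R}
    (hS : LinearIndependent R (fromRows A S).row) :
    (∃ U : Matrix (m ⊕ p) (m ⊕ p) R, IsUnit U ∧ fromRows A X = U * fromRows A S) ↔
      ∃ (Λ : Matrix p m R) (W : Matrix p p R), IsUnit W ∧ X = Λ * A + W * S := by
  simp only [fromRows_eq_mul_fromRows_iff hS]
  constructor
  · rintro ⟨_, hU, Λ, W, rfl, hX⟩
    exact ⟨Λ, W, (isUnit_fromBlocks_zero₁₂.mp hU).2, hX⟩
  · rintro ⟨Λ, W, hW, hX⟩
    exact ⟨fromBlocks 1 0 Λ W, isUnit_fromBlocks_zero₁₂.mpr ⟨isUnit_one, hW⟩, Λ, W, rfl, hX⟩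

end BlockMatrices

theorem unimodular_iff_isUnit {n : ℕ} {U : Matrix (Fin n) (Fin n) ℤ} :
    Unimodular U ↔ IsUnit U := by
  rw [isUnit_iff_isUnit_det, Int.isUnit_iff, Unimodular]

theorem IsSolution.linearIndependent_row_fromRows {r k : ℕ}
    {A : Matrix (Fin r) (Fin (r + k)) ℤ} {d : ℤ} {X : Matrix (Fin k) (Fin (r + k)) ℤ}
    (hd : d ≠ 0) (hX : IsSolution A d X) : LinearIndependent ℤ (fromRows A X).row := by
  have hdet : (stack A X).det ≠ 0 := by
    rcases hX with h | h <;> simpa only [h, ne_eq, neg_eq_zero] using hd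
  exact (linearIndependent_equiv finSumFinEquiv.symm).mp
    (linearIndependent_rows_of_det_ne_zero hdet)

theorem stack_eq_submatrix_mul_stack_iff {r k n : ℕ} {A : Matrix (Fin r) (Fin n) ℤ}
    {X X' : Matrix (Fin k) (Fin n) ℤ} (U : Matrix (Fin r ⊕ Fin k) (Fin r ⊕ Fin k) ℤ) :
    stack A X = U.submatrix finSumFinEquiv.symm finSumFinEquiv.symm * stack A X' ↔
      fromRows A X = U * fromRows A X' := by
  rw [stack, stack, submatrix_mul_equiv,
    ← (reindex finSumFinEquiv (Equiv.refl (Fin n))).apply_eq_iff_eq (x := fromRows A X)]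
  rfl

theorem laEquiv_iff_exists_isUnit {r k : ℕ} {A : Matrix (Fin r) (Fin (r + k)) ℤ}
    {X X' : Matrix (Fin k) (Fin (r + k)) ℤ} :
    LAEquiv A X X' ↔
      ∃ U : Matrix (Fin r ⊕ Fin k) (Fin r ⊕ Fin k) ℤ,
        IsUnit U ∧ fromRows A X = U * fromRows A X' := by
  simp only [LAEquiv, unimodular_iff_isUnit,
    (reindex finSumFinEquiv finSumFinEquiv).surjective.exists, reindex_apply,
    isUnit_submatrix_equiv, stack_eq_submatrix_mul_stack_iff]

/-- Two solutions `X` and `S` of `|det [A; X]| = d` are L-A-equivalent iff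
`X = Λ·A + W'·S` for some integer matrix `Λ` and some unimodular `W'`. -/
theorem stmt_16 {r k : ℕ} (hr : 0 < r) (hk : 0 < k)
    (A : Matrix (Fin r) (Fin (r + k)) ℤ) (hrank : A.rank = r)
    (d : ℤ) (hd : 0 < d)
    (X S : Matrix (Fin k) (Fin (r + k)) ℤ)
    (hX : IsSolution A d X) (hS : IsSolution A d S) :
    LAEquiv A X S ↔
      ∃ (Λ : Matrix (Fin k) (Fin r) ℤ) (W' : Matrix (Fin k) (Fin k) ℤ),
        Unimodular W' ∧ X = Λ * A + W' * S := by
  simpa only [laEquiv_iff_exists_isUnit, unimodular_iff_isUnit] using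
    stmt_16_general (hS.linearIndependent_row_fromRows hd.ne')
end
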